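/- Let G be a connected simple graph on a finite nonempty linearly ordered vertex type V with oriented incidence matrix D, let T be a spanning tree of G, and let S and F be vertices of G. Then there exists a unique integer 1-chain d' that is supported on the edges of T (i.e., d' vanishes on every edge of G not in T) and has boundary D·d' = 1_F − 1_S. -/

import Mathlib

open SimpleGraph Matrix

/-- The oriented incidence matrix of a simple graph on a linearly ordered vertex type:
the column of an edge with endpoints `a < b` has `+1` in row `b`, `-1` in row `a`,
and `0` elsewhere. -/
def orientedIncMat {V : Type*} [LinearOrder V] (G : SimpleGraph V) :
    Matrix V G.edgeSet ℤ := fun v e =>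
  (if v = (e : Sym2 V).sup then 1 else 0) - (if v = (e : Sym2 V).inf then 1 else 0)

theorem vecMul_orientedIncMat {V : Type*} [Fintype V] [LinearOrder V] (G : SimpleGraph V)
    (f : V → ℤ) (e : G.edgeSet) :
    (f ᵥ* orientedIncMat G) e = f (e : Sym2 V).sup - f (e : Sym2 V).inf := by
  simp [vecMul, dotProduct, orientedIncMat, mul_sub, Finset.sum_sub_distrib]

theorem orientedIncMat_mulVec_single {V : Type*} [LinearOrder V] (G : SimpleGraph V)
    [Fintype G.edgeSet] (e : G.edgeSet) :
    orientedIncMat G *ᵥ Pi.single e 1 =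
      Pi.single (e : Sym2 V).sup 1 - Pi.single (e : Sym2 V).inf 1 := by
  ext v
  simp [orientedIncMat, Pi.single_apply]

/-- A walk in a subgraph `T` of `G` carries a chain supported on `T` whose boundary is the
difference of the walk's endpoints. -/
theorem exists_chain_of_walk {V : Type*} [LinearOrder V] {G T : SimpleGraph V}
    [Fintype G.edgeSet] (hTG : T ≤ G) {u v : V} (p : T.Walk u v) :
    ∃ c : G.edgeSet → ℤ, (∀ e : G.edgeSet, (e : Sym2 V) ∉ T.edgeSet → c e = 0) ∧
      orientedIncMat G *ᵥ c = Pi.single v 1 - Pi.single u 1 := by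
  induction p with
  | nil => exact ⟨0, by simp⟩
  | @cons u w v h p ih =>
    obtain ⟨c, hc, hbd⟩ := ih
    let e : G.edgeSet := ⟨s(u, w), hTG h⟩
    have hsupp (x : G.edgeSet) (hx : (x : Sym2 V) ∉ T.edgeSet) :
        (Pi.single e 1 : G.edgeSet → ℤ) x = 0 := by
      apply Pi.single_eq_of_ne
      rintro rfl
      exact hx h
    have hcol := orientedIncMat_mulVec_single G e
    rcases le_total u w with huw | huw
    · refine ⟨c + Pi.single e 1, fun x hx => by simp [hc x hx, hsupp x hx], ?_⟩
      rw [mulVec_add, hbd, hcol]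
      simp [e, huw]
    · refine ⟨c - Pi.single e 1, fun x hx => by simp [hc x hx, hsupp x hx], ?_⟩
      rw [mulVec_sub, hbd, hcol]
      simp [e, huw]

/-- A cycle (chain with zero boundary) supported on an acyclic subgraph is zero. -/
theorem eq_zero_of_orientedIncMat_mulVec_eq_zero {V : Type*} [Fintype V] [LinearOrder V]
    {G T : SimpleGraph V} [Fintype G.edgeSet] (hT : T.IsAcyclic) {c : G.edgeSet → ℤ}
    (hc : ∀ e : G.edgeSet, (e : Sym2 V) ∉ T.edgeSet → c e = 0)
    (hbd : orientedIncMat G *ᵥ c = 0) : c = 0 := by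
  classical
  ext e
  by_cases he : (e : Sym2 V) ∈ T.edgeSet
  swap
  · exact hc e he
  have hmk (x : Sym2 V) : s(x.inf, x.sup) = x := by
    induction x with | _ a b => rcases le_total a b with h | h <;> simp [h, Sym2.eq_swap]
  have hbridge := isAcyclic_iff_forall_isBridge.mp hT he
  rw [← hmk e, isBridge_iff, hmk] at hbridge
  set H := T.deleteEdges {(e : Sym2 V)} with hH
  -- The indicator of one side of the cut defined by the bridge `e`.
  let f : V → ℤ := fun v => if H.Reachable (e : Sym2 V).inf v then 1 else 0
  have hcut (x : G.edgeSet) (hx : x ≠ e) : (f ᵥ* orientedIncMat G) x * c x = 0 := by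
    by_cases hxT : (x : Sym2 V) ∈ T.edgeSet
    swap
    · simp [hc x hxT]
    have hadj : H.Adj (x : Sym2 V).inf (x : Sym2 V).sup := by
      rw [hH, deleteEdges_adj, ← mem_edgeSet, hmk]
      exact ⟨hxT, fun h => hx (Subtype.ext h)⟩
    have hiff : H.Reachable (e : Sym2 V).inf (x : Sym2 V).sup ↔
        H.Reachable (e : Sym2 V).inf (x : Sym2 V).inf :=
      ⟨fun h => h.trans hadj.symm.reachable, fun h => h.trans hadj.reachable⟩
    simp [vecMul_orientedIncMat, f, hiff]
  have hsum : (f ᵥ* orientedIncMat G) ⬝ᵥ c = 0 := by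
    rw [← dotProduct_mulVec, hbd, dotProduct_zero]
  rw [dotProduct, Finset.sum_eq_single e (fun x _ hx => hcut x hx) (by simp),
    vecMul_orientedIncMat] at hsum
  simpa [f, hbridge] using hsum

theorem existsUnique_tree_chain_with_boundary {V : Type*} [Fintype V] [Nonempty V]
    [LinearOrder V] (G T : SimpleGraph V) [DecidableRel G.Adj] (hG : G.Connected)
    (hTG : T ≤ G) (hT : T.IsTree) (S F : V) :
    ∃! d' : G.edgeSet → ℤ,
      (∀ e : G.edgeSet, (e : Sym2 V) ∉ T.edgeSet → d' e = 0) ∧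
        orientedIncMat G *ᵥ d' = Pi.single F 1 - Pi.single S 1 := by
  obtain ⟨p⟩ := hT.connected.preconnected S F
  obtain ⟨c, hc, hbd⟩ := exists_chain_of_walk hTG p
  refine ⟨c, ⟨hc, hbd⟩, fun d ⟨hd, hdbd⟩ => sub_eq_zero.mp ?_⟩
  refine eq_zero_of_orientedIncMat_mulVec_eq_zero hT.isAcyclic (fun e he => ?_) ?_
  · simp [hc e he, hd e he]
  · rw [mulVec_sub, hdbd, hbd, sub_self]
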